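/- Let κ > 0 satisfy P(R ≥ κ) > 0 and P(R = κ) = 0. Then P(Y_t ≥ κt) = Q·D_I^{(1)}(κ)·t^{−(γ−1)}·(1+o(1)) as t → ∞, where D_I^{(1)}(κ) := (κ^{−γ}/γ)·E[R^γ·1{R ≥ κ}] + ((2−γ)·κ^{1−γ}/((γ−1)γ))·E[R^{γ−1}·1{R ≥ κ}]. -/

import Mathlib

open MeasureTheory Filter Set
open scoped ENNReal NNReal Topology

noncomputable section

/-- `ℓ_t(s,u)`: the length of the interval `[s,s+u] ∩ [0,t]`. -/
def ellK (t s u : ℝ) : ℝ := max 0 (min (s + u) t - max s 0)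

/-- The intensity measure `u^{-γ-1} du` on `(0,∞)`. -/
def muU (γ : ℝ) : Measure ℝ :=
  (volume.restrict (Set.Ioi 0)).withDensity fun u => ENNReal.ofReal (u ^ (-γ - 1))

/-- The measure `μ^ℓ_t` on `(0,∞)`:
`μ^ℓ_t(A) = ∫_ℝ ∫_0^∞ 1{ℓ_t(s,u) ∈ A} u^{-γ-1} du ds`. -/
def muEll (γ t : ℝ) : Measure ℝ :=
  (Measure.map (fun p : ℝ × ℝ => ellK t p.1 p.2)
    ((volume : Measure ℝ).prod (muU γ))).restrict (Set.Ioi 0)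

/-- The measure `μ^{ℓ,r}_t` on `(0,∞)`:
`μ^{ℓ,r}_t(A) = ∫_{(0,∞)} ∫_{(0,∞)} 1{rℓ ∈ A} μ^ℓ_t(dℓ) F_R(dr)`. -/
def muEllR (γ t : ℝ) (FR : Measure ℝ) : Measure ℝ :=
  (Measure.map (fun p : ℝ × ℝ => p.1 * p.2) (FR.prod (muEll γ t))).restrict (Set.Ioi 0)

/-- The measure `ν` on `[0,1]`: density `s^{-(γ+1)} + ((2-γ)/γ)·s^{-γ}` on `(0,1)` with
respect to Lebesgue measure, together with an atom of mass `1/(γ(γ-1))` at the point `1`. -/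
def nuM (γ : ℝ) : Measure ℝ :=
  (volume.restrict (Set.Ioo 0 1)).withDensity
      (fun s => ENNReal.ofReal (s ^ (-(γ + 1)) + (2 - γ) / γ * s ^ (-γ)))
    + (Real.toNNReal (1 / (γ * (γ - 1)))) • Measure.dirac 1

instance nuM.sigmaFinite (γ : ℝ) : SigmaFinite (nuM γ) := by
  unfold nuM; infer_instance

end


/-- The compensated exponential kernel. -/
noncomputable def kerK (θ v : ℝ) : ℂ :=
  Complex.exp (θ * v * Complex.I) - 1 - θ * v * Complex.I

/-- The integrable bound `min(|v|, v²)`. -/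
noncomputable def mB (v : ℝ) : ℝ := min |v| (v ^ 2)

lemma kerK_bound (θ v : ℝ) : ‖kerK θ v‖ ≤ 2 * (|θ| + θ ^ 2) * mB v := by
  have h1 : ‖kerK θ v‖ ≤ 2 * mB (θ * v) := by
    unfold kerK mB
    have e : (θ * v * Complex.I : ℂ) = ((θ * v : ℝ) : ℂ) * Complex.I := by push_cast; ring
    rw [e]
    set x := θ * v
    have hn : ‖((x : ℝ) : ℂ) * Complex.I‖ = |x| := by simp
    rcases le_total |x| 1 with h | h
    · have := Complex.norm_exp_sub_one_sub_id_le (x := (x : ℂ) * Complex.I) (by rw [hn]; exact h)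
      rw [hn, sq_abs] at this
      have h2 : x ^ 2 ≤ |x| := by rw [← sq_abs]; nlinarith [abs_nonneg x]
      rw [min_eq_right h2]
      nlinarith [sq_nonneg x]
    · have h2 : |x| ≤ x ^ 2 := by rw [← sq_abs]; nlinarith [abs_nonneg x]
      rw [min_eq_left h2]
      have h3 : ‖Complex.exp (x * Complex.I) - 1‖ ≤ |x| := by
        rw [mul_comm]; exact Real.norm_exp_I_mul_ofReal_sub_one_le
      calc _ ≤ _ := norm_sub_le _ _
        _ ≤ |x| + |x| := by rw [hn]; gcongr
        _ = _ := by ring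
  refine h1.trans ?_
  have : mB (θ * v) ≤ (|θ| + θ ^ 2) * mB v := by
    unfold mB
    rw [abs_mul, mul_pow]
    rcases le_total |v| (v ^ 2) with h | h
    · rw [min_eq_left h]
      refine (min_le_left _ _).trans ?_
      nlinarith [mul_nonneg (sq_nonneg θ) (abs_nonneg v)]
    · rw [min_eq_right h]
      refine (min_le_right _ _).trans ?_
      nlinarith [mul_nonneg (abs_nonneg θ) (sq_nonneg v)]
  linarith

lemma mB_nonneg (v : ℝ) : 0 ≤ mB v := le_min (abs_nonneg _) (sq_nonneg _)

lemma continuous_mB : Continuous mB := by unfold mB; fun_prop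

lemma continuous_kerK : Continuous (Function.uncurry kerK) := by
  unfold kerK Function.uncurry; fun_prop

lemma swap_aux (m : Measure ℝ) [SFinite m] (K : ℝ → ℝ → ℂ) (hK : Continuous (Function.uncurry K))
    (b : ℝ → ℝ) (hb : Integrable b m) (C θ : ℝ)
    (hC : ∀ a ∈ Set.Icc (-1 : ℝ) 1, ∀ v, ‖K (θ + a) v‖ ≤ C * b v) :
    ∫ v, (∫ a in (-1 : ℝ)..1, (K θ v - K (θ + a) v)) ∂m
      = ∫ a in (-1 : ℝ)..1, ((∫ v, K θ v ∂m) - ∫ v, K (θ + a) v ∂m) := by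
  have hI : ∀ a ∈ Set.Icc (-1 : ℝ) 1, Integrable (K (θ + a)) m := fun a ha => by
    refine (hb.const_mul C).mono' ?_ (ae_of_all _ (hC a ha))
    exact (hK.comp (Continuous.prodMk_right (θ + a))).aestronglyMeasurable
  have h0 : ∀ v, ‖K θ v‖ ≤ C * b v := by simpa using hC 0 (by simp)
  have hI0 : Integrable (K θ) m := by simpa using hI 0 (by simp)
  have hu : Set.uIoc (-1 : ℝ) 1 = Set.Ioc (-1) 1 := Set.uIoc_of_le (by norm_num)
  rw [← intervalIntegral_integral_swap (f := fun a v => K θ v - K (θ + a) v)]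
  · apply intervalIntegral.integral_congr
    intro a ha
    rw [Set.uIcc_of_le (by norm_num)] at ha
    exact integral_sub hI0 (hI a ha)
  · have hg : Integrable (fun p : ℝ × ℝ => (1 : ℝ) * (2 * C * b p.2))
        ((volume.restrict (Set.uIoc (-1 : ℝ) 1)).prod m) := by
      refine Integrable.mul_prod (f := fun _ : ℝ => (1:ℝ)) (g := fun v => 2 * C * b v) ?_ ?_
      · rw [hu]; simp
      · exact hb.const_mul _
    refine hg.mono' ?_ ?_
    · apply Continuous.aestronglyMeasurable
      have h1 : Continuous fun p : ℝ × ℝ => K θ p.2 := hK.comp (by fun_prop : Continuous fun p : ℝ × ℝ => (θ, p.2))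
      have h2 : Continuous fun p : ℝ × ℝ => K (θ + p.1) p.2 :=
        hK.comp (by fun_prop : Continuous fun p : ℝ × ℝ => (θ + p.1, p.2))
      exact h1.sub h2
    · have : ∀ᵐ p ∂((volume.restrict (Set.uIoc (-1 : ℝ) 1)).prod m), p.1 ∈ Set.Ioc (-1 : ℝ) 1 := by
        rw [hu]
        exact Measure.quasiMeasurePreserving_fst.ae (ae_restrict_mem measurableSet_Ioc)
      filter_upwards [this] with p hp
      calc _ ≤ ‖K θ p.2‖ + ‖K (θ + p.1) p.2‖ := norm_sub_le _ _
        _ ≤ C * b p.2 + C * b p.2 := add_le_add (h0 _) (hC _ ⟨hp.1.le, hp.2⟩ _)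
        _ = _ := by ring

/-- weight -/
noncomputable def wS (x : ℝ) : ℝ := 1 - Real.sinc x

lemma wS_nonneg (x : ℝ) : 0 ≤ wS x := by unfold wS; linarith [Real.sinc_le_one x]
lemma wS_le (x : ℝ) : wS x ≤ 2 := by unfold wS; linarith [Real.neg_one_le_sinc x]
lemma continuous_wS : Continuous wS := by
  unfold wS; exact continuous_const.sub Real.continuous_sinc

lemma integral_exp_sinc (x : ℝ) :
    ∫ a in (-1 : ℝ)..1, Complex.exp (a * x * Complex.I) = 2 * Real.sinc x := by
  by_cases hx : x = 0
  · simp [hx]; norm_num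
  have h := integral_exp_mul_I_eq_sinc x
  have h2 := intervalIntegral.integral_comp_mul_right (a := -1) (b := 1)
    (fun t : ℝ => Complex.exp (t * Complex.I)) hx
  simp only [Complex.ofReal_mul, neg_mul, one_mul] at h2
  rw [h2, h]
  rw [Complex.real_smul]
  push_cast
  have : (x : ℂ) ≠ 0 := by exact_mod_cast hx
  field_simp

lemma ker_exp (θ v : ℝ) :
    ∫ a in (-1 : ℝ)..1, (Complex.exp (θ * v * Complex.I)
      - Complex.exp (((θ + a : ℝ) : ℂ) * v * Complex.I))
      = 2 * (wS v * Complex.exp (θ * v * Complex.I)) := by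
  have : ∀ a : ℝ, Complex.exp (θ * v * Complex.I)
      - Complex.exp (((θ + a : ℝ) : ℂ) * v * Complex.I)
      = Complex.exp (θ * v * Complex.I) - Complex.exp (θ * v * Complex.I) *
        Complex.exp (a * v * Complex.I) := by
    intro a; rw [← Complex.exp_add]; push_cast; ring_nf
  simp_rw [this]
  rw [intervalIntegral.integral_sub, intervalIntegral.integral_const_mul, integral_exp_sinc]
  · simp [wS]; ring
  · simp
  · apply Continuous.intervalIntegrable; fun_prop

lemma ker_kerK (θ v : ℝ) :
    ∫ a in (-1 : ℝ)..1, (kerK θ v - kerK (θ + a) v)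
      = 2 * (wS v * Complex.exp (θ * v * Complex.I)) := by
  have : ∀ a : ℝ, kerK θ v - kerK (θ + a) v = (Complex.exp (θ * v * Complex.I)
      - Complex.exp (((θ + a : ℝ) : ℂ) * v * Complex.I)) + ((a : ℝ) : ℂ) * (v * Complex.I) := by
    intro a; unfold kerK; push_cast; ring
  simp_rw [this]
  rw [intervalIntegral.integral_add, ker_exp, intervalIntegral.integral_mul_const,
    intervalIntegral.integral_ofReal]
  · simp
  · apply Continuous.intervalIntegrable; fun_prop
  · apply Continuous.intervalIntegrable; fun_prop

/-- Fourier integral of weighted probability measure. -/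
lemma fourier_prob (μ : Measure ℝ) [IsProbabilityMeasure μ] (θ : ℝ) :
    2 * ∫ x, (wS x * Complex.exp (θ * x * Complex.I)) ∂μ
      = ∫ a in (-1 : ℝ)..1, (charFun μ θ - charFun μ (θ + a)) := by
  rw [← integral_const_mul]
  simp_rw [← ker_exp, charFun_apply_real]
  refine swap_aux μ (fun θ x => Complex.exp (θ * x * Complex.I)) ?_ (fun _ => 1)
    (integrable_const _) 1 θ ?_
  · unfold Function.uncurry; fun_prop
  · intro a _ v
    have : (((θ + a : ℝ) : ℂ) * v * Complex.I) = (((θ + a) * v : ℝ) : ℂ) * Complex.I := by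
      push_cast; ring
    simp only [this, Complex.norm_exp_ofReal_mul_I]; norm_num

lemma fourier_levy (π : Measure ℝ) [SFinite π] (hπ : Integrable mB π) (θ : ℝ) :
    2 * ∫ x, (wS x * Complex.exp (θ * x * Complex.I)) ∂π
      = ∫ a in (-1 : ℝ)..1, ((∫ v, kerK θ v ∂π) - ∫ v, kerK (θ + a) v ∂π) := by
  rw [← integral_const_mul]
  simp_rw [← ker_kerK]
  refine swap_aux π kerK continuous_kerK mB hπ (2 * ((|θ| + 1) + (|θ| + 1) ^ 2)) θ ?_
  intro a ha v
  refine (kerK_bound _ _).trans ?_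
  have h1 : |θ + a| ≤ |θ| + 1 := (abs_add_le _ _).trans (by gcongr; exact abs_le.2 ha)
  have h2 : (θ + a) ^ 2 ≤ (|θ| + 1) ^ 2 := by rw [← sq_abs]; gcongr
  gcongr
  exact mB_nonneg v

lemma fourier_tendsto (π : Measure ℝ) [SFinite π] (hπ : Integrable mB π)
    (μ : ℕ → Measure ℝ) [∀ n, IsProbabilityMeasure (μ n)] (ε : ℕ → ℝ) (hε : ∀ n, 0 < ε n)
    (hε0 : Tendsto ε atTop (𝓝 0))
    (hch : ∀ n θ, charFun (μ n) θ = Complex.exp (ε n * ∫ v, kerK θ v ∂π)) (θ : ℝ) :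
    Tendsto (fun n => ((ε n)⁻¹ : ℂ) * ∫ x, (wS x * Complex.exp (θ * x * Complex.I)) ∂(μ n)) atTop
      (𝓝 (∫ x, (wS x * Complex.exp (θ * x * Complex.I)) ∂π)) := by
  set ψ : ℝ → ℂ := fun θ => ∫ v, kerK θ v ∂π with hψ
  obtain ⟨C, hC1, hC⟩ : ∃ C : ℝ, 0 < C ∧ ∀ a ∈ Set.Icc (-1 : ℝ) 1, ‖ψ (θ + a)‖ ≤ C := by
    refine ⟨(2 * ((|θ| + 1) + (|θ| + 1) ^ 2)) * (∫ v, mB v ∂π) + 1, ?_, ?_⟩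
    · have : 0 ≤ ∫ v, mB v ∂π := integral_nonneg mB_nonneg
      positivity
    intro a ha
    have h1 : |θ + a| ≤ |θ| + 1 := (abs_add_le _ _).trans (by gcongr; exact abs_le.2 ha)
    have h2 : (θ + a) ^ 2 ≤ (|θ| + 1) ^ 2 := by rw [← sq_abs]; gcongr
    rw [← integral_const_mul]
    refine le_add_of_le_of_nonneg (norm_integral_le_of_norm_le (hπ.const_mul _) ?_) zero_le_one
    refine ae_of_all _ fun v => (kerK_bound _ _).trans ?_
    gcongr
    exact mB_nonneg v
  have key : Tendsto (fun n => ∫ a in (-1 : ℝ)..1,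
      ((ε n)⁻¹ : ℂ) * (charFun (μ n) θ - charFun (μ n) (θ + a))) atTop
      (𝓝 (∫ a in (-1 : ℝ)..1, (ψ θ - ψ (θ + a)))) := by
    have hsl : ∀ z : ℂ, Tendsto (fun n => ((ε n)⁻¹ : ℂ) * (Complex.exp (ε n * z) - 1)) atTop (𝓝 z) := by
      intro z
      have hd : HasDerivAt (fun s : ℝ => Complex.exp (s * z)) z 0 := by
        have := ((Complex.ofRealCLM.hasDerivAt (x := (0:ℝ))).mul_const z).cexp
        simpa using this
      have := hd.tendsto_slope_zero
      simp only [zero_add, Complex.ofReal_zero, zero_mul, Complex.exp_zero] at this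
      have h2 : Tendsto ε atTop (𝓝[≠] 0) :=
        tendsto_nhdsWithin_iff.2 ⟨hε0, Eventually.of_forall fun n => (hε n).ne'⟩
      refine (this.comp h2).congr fun n => ?_
      simp [Complex.real_smul]
    refine intervalIntegral.tendsto_integral_filter_of_dominated_convergence (fun _ => 4 * C) ?_ ?_ ?_ ?_
    · refine Eventually.of_forall fun n => Continuous.aestronglyMeasurable ?_
      have := continuous_charFun (μ := μ n)
      fun_prop
    · have : ∀ᶠ n in atTop, ε n * C ≤ 1 := by
        have := hε0.mul_const C
        rw [zero_mul] at this
        exact this.eventually (ge_mem_nhds one_pos) 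
      filter_upwards [this] with n hn
      refine ae_of_all _ fun a ha => ?_
      rw [Set.uIoc_of_le (by norm_num)] at ha
      have hb : ∀ a ∈ Set.Icc (-1 : ℝ) 1, ‖charFun (μ n) (θ + a) - 1‖ ≤ 2 * (ε n * C) := by
        intro a ha
        rw [hch]
        have hz : ‖(ε n : ℂ) * ψ (θ + a)‖ ≤ ε n * C := by
          rw [norm_mul, Complex.norm_real, Real.norm_of_nonneg (hε n).le]
          exact mul_le_mul_of_nonneg_left (hC a ha) (hε n).le
        exact (Complex.norm_exp_sub_one_le (hz.trans hn)).trans (by linarith)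
      have h0 := hb 0 (by simp)
      rw [add_zero] at h0
      have h1 := hb a ⟨ha.1.le, ha.2⟩
      rw [norm_mul, norm_inv, Complex.norm_real, Real.norm_of_nonneg (hε n).le]
      rw [inv_mul_le_iff₀ (hε n)]
      calc _ = ‖(charFun (μ n) θ - 1) - (charFun (μ n) (θ + a) - 1)‖ := by congr 1; ring
        _ ≤ _ := norm_sub_le _ _
        _ ≤ _ := by linarith
    · simp
    · refine ae_of_all _ fun a ha => ?_
      refine ((hsl (ψ θ)).sub (hsl (ψ (θ + a)))).congr fun n => ?_
      rw [hch, hch]; ring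
  have e1 := fourier_levy π hπ θ
  have h2 := key.const_mul (2⁻¹ : ℂ)
  rw [← e1] at h2
  have : (2⁻¹ : ℂ) * (2 * ∫ x, (wS x * Complex.exp (θ * x * Complex.I)) ∂π) = ∫ x, (wS x * Complex.exp (θ * x * Complex.I)) ∂π := by
    ring
  rw [this] at h2
  refine h2.congr fun n => ?_
  rw [intervalIntegral.integral_const_mul, ← fourier_prob]
  ring

lemma levy_finite (ρ : ℕ → FiniteMeasure ℝ) (ρ0 : FiniteMeasure ℝ) (h0 : ρ0 ≠ 0)
    (h : ∀ θ : ℝ, Tendsto (fun n => charFun (ρ n : Measure ℝ) θ) atTop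
      (𝓝 (charFun (ρ0 : Measure ℝ) θ))) : Tendsto ρ atTop (𝓝 ρ0) := by
  have hmass : Tendsto (fun n => (ρ n).mass) atTop (𝓝 ρ0.mass) := by
    have := h 0
    simp only [charFun_zero] at this
    have h2 := (Complex.continuous_re.tendsto _).comp this
    simp only [Function.comp_def, Complex.ofReal_re] at h2
    exact NNReal.tendsto_coe.1 h2
  have hm0 : ρ0.mass ≠ 0 := (FiniteMeasure.mass_nonzero_iff _).2 h0
  refine FiniteMeasure.tendsto_of_tendsto_normalize_testAgainstNN_of_tendsto_mass ?_ hmass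
  refine ProbabilityMeasure.tendsto_of_tendsto_charFun fun θ => ?_
  have hch : ∀ ρ : FiniteMeasure ℝ, ρ ≠ 0 → charFun (ρ.normalize : Measure ℝ) θ
      = ((ρ.mass : ℝ) : ℂ)⁻¹ * charFun (ρ : Measure ℝ) θ := by
    intro ρ hρ
    rw [FiniteMeasure.toMeasure_normalize_eq_of_nonzero _ hρ, charFun_apply_real,
      charFun_apply_real, integral_smul_nnreal_measure]
    rw [NNReal.smul_def, Complex.real_smul]; simp
  rw [hch _ h0]
  have hev : ∀ᶠ n in atTop, (ρ n).mass ≠ 0 := hmass.eventually_ne hm0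
  have hlim : Tendsto (fun n => (((ρ n).mass : ℝ) : ℂ)⁻¹ * charFun (ρ n : Measure ℝ) θ) atTop
      (𝓝 (((ρ0.mass : ℝ) : ℂ)⁻¹ * charFun (ρ0 : Measure ℝ) θ)) := by
    refine Tendsto.mul (Tendsto.inv₀ ?_ (by exact_mod_cast hm0)) (h θ)
    exact (Complex.continuous_ofReal.tendsto _).comp (NNReal.tendsto_coe.2 hmass)
  refine hlim.congr' ?_
  filter_upwards [hev] with n hn
  rw [hch _ ((FiniteMeasure.mass_nonzero_iff _).1 hn)]

lemma wS_le_mB (v : ℝ) : wS v ≤ 4 * mB v := by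
  have h := ker_kerK 0 v
  have h2 : ‖∫ a in (-1 : ℝ)..1, (kerK 0 v - kerK (0 + a) v)‖ ≤ (4 * mB v) * |1 - (-1 : ℝ)| := by
    apply intervalIntegral.norm_integral_le_of_norm_le_const
    intro a ha
    rw [Set.uIoc_of_le (by norm_num)] at ha
    have h3 : kerK 0 v = 0 := by simp [kerK]
    rw [h3, zero_sub, norm_neg, zero_add]
    refine (kerK_bound _ _).trans ?_
    have : |a| ≤ 1 := abs_le.2 ⟨ha.1.le, ha.2⟩
    have h4 : a ^ 2 ≤ 1 := by rw [← sq_abs]; nlinarith [abs_nonneg a]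
    have := mB_nonneg v
    nlinarith
  rw [h] at h2
  simp only [Complex.ofReal_zero, zero_mul, Complex.exp_zero, mul_one, norm_mul, Complex.norm_real,
    Real.norm_of_nonneg (wS_nonneg v)] at h2
  norm_num at h2
  linarith

lemma integrable_wS (π : Measure ℝ) (hπ : Integrable mB π) : Integrable wS π := by
  refine (hπ.const_mul 4).mono' continuous_wS.aestronglyMeasurable (ae_of_all _ fun v => ?_)
  rw [Real.norm_of_nonneg (wS_nonneg v)]; exact wS_le_mB v

lemma weighted_tendsto (π : Measure ℝ) [SFinite π] (hπ : Integrable mB π)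
    (hpos : ∫ x, wS x ∂π ≠ 0)
    (μ : ℕ → Measure ℝ) [∀ n, IsProbabilityMeasure (μ n)] (ε : ℕ → ℝ) (hε : ∀ n, 0 < ε n)
    (hε0 : Tendsto ε atTop (𝓝 0))
    (hch : ∀ n θ, charFun (μ n) θ = Complex.exp (ε n * ∫ v, kerK θ v ∂π))
    (h : BoundedContinuousFunction ℝ ℝ) :
    Tendsto (fun n => (ε n)⁻¹ * ∫ x, wS x * h x ∂(μ n)) atTop
      (𝓝 (∫ x, wS x * h x ∂π)) := by
  set d : ℝ → ℝ≥0 := fun x => Real.toNNReal (wS x) with hd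
  have hdm : Measurable d := (continuous_real_toNNReal.comp continuous_wS).measurable
  have hdv : ∀ x, (d x : ℝ) = wS x := fun x => Real.coe_toNNReal _ (wS_nonneg x)
  have hfin : ∀ m : Measure ℝ, Integrable wS m → IsFiniteMeasure (m.withDensity fun x => d x) := by
    intro m hm
    apply isFiniteMeasure_withDensity
    have := hm.lintegral_lt_top
    exact this.ne
  have hI : ∀ n, Integrable wS (μ n) := fun n => by
    refine (integrable_const (2 : ℝ)).mono' continuous_wS.aestronglyMeasurable
      (ae_of_all _ fun v => ?_)
    rw [Real.norm_of_nonneg (wS_nonneg v)]; exact wS_le v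
  have hcf : ∀ (m : Measure ℝ) (θ : ℝ), charFun (m.withDensity fun x => d x) θ
      = ∫ x, (wS x * Complex.exp (θ * x * Complex.I)) ∂m := by
    intro m θ
    rw [charFun_apply_real, integral_withDensity_eq_integral_smul hdm]
    simp only [NNReal.smul_def, hdv, Complex.real_smul]
  let ρ' : ℕ → FiniteMeasure ℝ := fun n => ⟨(μ n).withDensity fun x => d x, hfin _ (hI n)⟩
  let ρ : ℕ → FiniteMeasure ℝ := fun n => (Real.toNNReal (ε n)⁻¹) • ρ' n
  let ρ0 : FiniteMeasure ℝ := ⟨π.withDensity fun x => d x, hfin _ (integrable_wS π hπ)⟩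
  have hεi : ∀ n, 0 ≤ (ε n)⁻¹ := fun n => (inv_pos.2 (hε n)).le
  have hρ : ∀ n, ((ρ n : FiniteMeasure ℝ) : Measure ℝ)
      = (Real.toNNReal (ε n)⁻¹) • ((μ n).withDensity fun x => d x) := fun n => rfl
  have hρ0 : ((ρ0 : FiniteMeasure ℝ) : Measure ℝ) = π.withDensity fun x => d x := rfl
  have hne : ρ0 ≠ 0 := by
    intro hz
    have : (ρ0 : Measure ℝ) = 0 := by rw [hz]; rfl
    have h1 : ∫ x, (1 : ℝ) ∂(ρ0 : Measure ℝ) = 0 := by rw [this]; simp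
    rw [hρ0, integral_withDensity_eq_integral_smul hdm] at h1
    simp only [NNReal.smul_def, hdv, smul_eq_mul, mul_one] at h1
    exact hpos h1
  have hT : Tendsto ρ atTop (𝓝 ρ0) := by
    refine levy_finite ρ ρ0 hne fun θ => ?_
    rw [hρ0, hcf]
    refine (fourier_tendsto π hπ μ ε hε hε0 hch θ).congr fun n => ?_
    rw [← hcf, hρ, charFun_apply_real, charFun_apply_real, integral_smul_nnreal_measure,
      NNReal.smul_def, Complex.real_smul, Real.coe_toNNReal _ (hεi n)]
    simp
  have := (FiniteMeasure.tendsto_iff_forall_integral_tendsto.1 hT) h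
  rw [hρ0, integral_withDensity_eq_integral_smul hdm] at this
  simp only [NNReal.smul_def, hdv, smul_eq_mul] at this
  refine this.congr fun n => ?_
  rw [hρ, integral_smul_nnreal_measure, NNReal.smul_def, Real.coe_toNNReal _ (hεi n),
    integral_withDensity_eq_integral_smul hdm]
  simp only [NNReal.smul_def, hdv, smul_eq_mul]

lemma wS_pos {x : ℝ} (hx : 0 < x) : 0 < wS x := by
  unfold wS
  rw [Real.sinc_of_ne_zero hx.ne']
  have := Real.sin_lt hx
  have : Real.sin x / x < 1 := (div_lt_one hx).2 this
  linarith

lemma wS_lower {a : ℝ} (ha : 0 < a) : ∃ c > 0, ∀ x, a ≤ x → c ≤ wS x := by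
  obtain ⟨x0, hx0, hmin⟩ := (isCompact_Icc (a := a) (b := max a 2)).exists_isMinOn
    ⟨a, by simp⟩ continuous_wS.continuousOn
  refine ⟨min (wS x0) (1 / 2), lt_min (wS_pos (ha.trans_le hx0.1)) (by norm_num), fun x hx => ?_⟩
  rcases le_total x (max a 2) with h | h
  · exact (min_le_left _ _).trans (hmin ⟨hx, h⟩)
  · refine (min_le_right _ _).trans ?_
    have h2 : 2 ≤ x := (le_max_right _ _).trans h
    have hx0 : 0 < x := by linarith
    have := Real.sinc_le_inv_abs hx0.ne'
    rw [abs_of_pos hx0] at this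
    have h3 : x⁻¹ ≤ 2⁻¹ := inv_anti₀ (by norm_num) h2
    unfold wS
    norm_num at *
    linarith

/-- Continuous ramp from `0` (left of `a`) to `1` (right of `b`). -/
noncomputable def ramp (a b x : ℝ) : ℝ := max 0 (min 1 ((x - a) / (b - a)))

lemma ramp_nonneg (a b x : ℝ) : 0 ≤ ramp a b x := le_max_left _ _
lemma ramp_le_one (a b x : ℝ) : ramp a b x ≤ 1 := max_le zero_le_one (min_le_left _ _)
lemma ramp_cont (a b : ℝ) : Continuous (ramp a b) := by unfold ramp; fun_prop
lemma ramp_zero {a b x : ℝ} (hab : a < b) (hx : x ≤ a) : ramp a b x = 0 := by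
  unfold ramp
  refine max_eq_left ((min_le_right _ _).trans ?_)
  exact div_nonpos_of_nonpos_of_nonneg (by linarith) (by linarith)
lemma ramp_one {a b x : ℝ} (hab : a < b) (hx : b ≤ x) : ramp a b x = 1 := by
  unfold ramp
  rw [min_eq_left, max_eq_right zero_le_one]
  rw [le_div_iff₀ (by linarith)]; linarith

lemma ramp_tendsto (π : Measure ℝ) [SFinite π] (hπ : Integrable mB π)
    (hpos : ∫ x, wS x ∂π ≠ 0)
    (μ : ℕ → Measure ℝ) [∀ n, IsProbabilityMeasure (μ n)] (ε : ℕ → ℝ) (hε : ∀ n, 0 < ε n)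
    (hε0 : Tendsto ε atTop (𝓝 0))
    (hch : ∀ n θ, charFun (μ n) θ = Complex.exp (ε n * ∫ v, kerK θ v ∂π))
    (a b : ℝ) (ha : 0 < a) (hab : a < b) :
    Tendsto (fun n => (ε n)⁻¹ * ∫ x, ramp a b x ∂(μ n)) atTop
      (𝓝 (∫ x, ramp a b x ∂π)) := by
  obtain ⟨c, hc, hcw⟩ := wS_lower ha
  have hmax : ∀ x, 0 < max c (wS x) := fun x => lt_max_of_lt_left hc
  let h : BoundedContinuousFunction ℝ ℝ := BoundedContinuousFunction.ofNormedAddCommGroup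
    (fun x => ramp a b x / max c (wS x))
    ((ramp_cont a b).div (continuous_const.max continuous_wS) fun x => (hmax x).ne') c⁻¹ (by
      intro x
      rw [Real.norm_of_nonneg (div_nonneg (ramp_nonneg _ _ _) (hmax x).le), ← one_div]
      exact div_le_div₀ zero_le_one (ramp_le_one _ _ _) hc (le_max_left _ _))
  have hh : ∀ x, wS x * h x = ramp a b x := by
    intro x
    change wS x * (ramp a b x / max c (wS x)) = _
    rcases le_total x a with hx | hx
    · rw [ramp_zero hab hx]; simp
    · rw [max_eq_right (hcw x hx)]
      have := (hc.trans_le (hcw x hx)).ne'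
      field_simp
  have := weighted_tendsto π hπ hpos μ ε hε hε0 hch h
  simpa only [hh] using this

lemma small_time (π : Measure ℝ) [SFinite π] (hπ : Integrable mB π)
    (hpos : ∫ x, wS x ∂π ≠ 0)
    (μ : ℕ → Measure ℝ) [∀ n, IsProbabilityMeasure (μ n)] (ε : ℕ → ℝ) (hε : ∀ n, 0 < ε n)
    (hε0 : Tendsto ε atTop (𝓝 0))
    (hch : ∀ n θ, charFun (μ n) θ = Complex.exp (ε n * ∫ v, kerK θ v ∂π))
    (κ : ℝ) (hκ : 0 < κ) (hat : π {κ} = 0) :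
    Tendsto (fun n => (ε n)⁻¹ * (μ n).real (Set.Ici κ)) atTop (𝓝 (π.real (Set.Ici κ))) := by
  have hfin : π (Set.Ici (κ / 2)) < ⊤ := by
    obtain ⟨c, hc, hcw⟩ := wS_lower (half_pos hκ)
    refine lt_of_le_of_lt (measure_mono (t := {x | c ≤ ‖wS x‖}) ?_)
      ((integrable_wS π hπ).measure_norm_ge_lt_top hc)
    intro x hx
    exact (hcw x hx).trans (Real.le_norm_self _)
  have hbI : Integrable ((Set.Ici (κ / 2)).indicator fun _ => (1 : ℝ)) π := by
    rw [integrable_indicator_iff measurableSet_Ici]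
    exact integrableOn_const hfin.ne
  have hrb : ∀ a b, κ / 2 ≤ a → a < b → ∀ x,
      ‖ramp a b x‖ ≤ (Set.Ici (κ / 2)).indicator (fun _ => (1 : ℝ)) x := by
    intro a b ha hab x
    rw [Real.norm_of_nonneg (ramp_nonneg _ _ _)]
    by_cases hx : κ / 2 ≤ x
    · rw [Set.indicator_of_mem (by exact hx)]; exact ramp_le_one _ _ _
    · rw [Set.indicator_of_notMem (by exact hx), ramp_zero hab (by linarith)]
  set δ : ℕ → ℝ := fun k => κ / ((k : ℝ) + 2) with hδdef
  have hδ : ∀ k, 0 < δ k := fun k => by simp only [hδdef]; positivity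
  have hδ2 : ∀ k, δ k ≤ κ / 2 := fun k => by
    simp only [hδdef]
    gcongr
    have : (0 : ℝ) ≤ k := Nat.cast_nonneg k
    linarith
  have hδ0 : Tendsto δ atTop (𝓝 0) := by
    refine Tendsto.div_atTop (tendsto_const_nhds) ?_
    exact tendsto_atTop_add_const_right _ _ tendsto_natCast_atTop_atTop
  have hreal : π.real (Set.Ici κ) = ∫ x, (Set.Ici κ).indicator (fun _ => (1 : ℝ)) x ∂π := by
    rw [integral_indicator measurableSet_Ici]; simp
  have hup : Tendsto (fun k => ∫ x, ramp (κ - δ k) κ x ∂π) atTop (𝓝 (π.real (Set.Ici κ))) := by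
    rw [hreal]
    refine tendsto_integral_of_dominated_convergence _
      (fun k => (ramp_cont _ _).aestronglyMeasurable) hbI
      (fun k => ae_of_all _ (hrb _ _ (by linarith [hδ2 k]) (by linarith [hδ k]))) ?_
    refine ae_of_all _ fun x => ?_
    by_cases hx : κ ≤ x
    · rw [Set.indicator_of_mem (by exact hx)]
      refine tendsto_const_nhds.congr fun k => ?_
      rw [ramp_one (by linarith [hδ k]) hx]
    · rw [Set.indicator_of_notMem (by exact hx)]
      refine tendsto_const_nhds.congr' ?_
      have : ∀ᶠ k in atTop, δ k < κ - x := hδ0.eventually (gt_mem_nhds (by linarith))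
      filter_upwards [this] with k hk
      rw [ramp_zero (by linarith [hδ k]) (by linarith)]
  have hlo : Tendsto (fun k => ∫ x, ramp κ (κ + δ k) x ∂π) atTop (𝓝 (π.real (Set.Ici κ))) := by
    rw [hreal]
    refine tendsto_integral_of_dominated_convergence _
      (fun k => (ramp_cont _ _).aestronglyMeasurable) hbI
      (fun k => ae_of_all _ (hrb _ _ (by linarith) (by linarith [hδ k]))) ?_
    have hae : ∀ᵐ x ∂π, x ≠ κ := by
      rw [ae_iff]; simpa using hat
    filter_upwards [hae] with x hxne
    by_cases hx : κ ≤ x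
    · rw [Set.indicator_of_mem (by exact hx)]
      have hlt : κ < x := lt_of_le_of_ne hx hxne.symm
      refine tendsto_const_nhds.congr' ?_
      have : ∀ᶠ k in atTop, δ k < x - κ := hδ0.eventually (gt_mem_nhds (by linarith))
      filter_upwards [this] with k hk
      rw [ramp_one (by linarith [hδ k]) (by linarith)]
    · rw [Set.indicator_of_notMem (by exact hx)]
      refine tendsto_const_nhds.congr fun k => ?_
      rw [ramp_zero (by linarith [hδ k]) (by linarith)]
  have hRI : ∀ n a b, Integrable (ramp a b) (μ n) := fun n a b => by
    refine (integrable_const (1 : ℝ)).mono' (ramp_cont a b).aestronglyMeasurable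
      (ae_of_all _ fun v => ?_)
    rw [Real.norm_of_nonneg (ramp_nonneg _ _ _)]; exact ramp_le_one _ _ _
  have hII : ∀ n, Integrable ((Set.Ici κ).indicator fun _ => (1 : ℝ)) (μ n) := fun n =>
    (integrable_const (1 : ℝ)).indicator measurableSet_Ici
  have hrealn : ∀ n, (μ n).real (Set.Ici κ)
      = ∫ x, (Set.Ici κ).indicator (fun _ => (1 : ℝ)) x ∂(μ n) := fun n => by
    rw [integral_indicator measurableSet_Ici]; simp
  refine tendsto_order.2 ⟨fun l hl => ?_, fun u hu => ?_⟩
  · obtain ⟨k, hk⟩ := (hlo.eventually (lt_mem_nhds hl)).exists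
    have := ramp_tendsto π hπ hpos μ ε hε hε0 hch κ (κ + δ k) hκ (by linarith [hδ k])
    filter_upwards [this.eventually (lt_mem_nhds hk)] with n hn
    refine hn.trans_le (mul_le_mul_of_nonneg_left ?_ (inv_pos.2 (hε n)).le)
    rw [hrealn]
    refine integral_mono (hRI _ _ _) (hII n) fun x => ?_
    by_cases hx : κ ≤ x
    · rw [Set.indicator_of_mem (by exact hx)]; exact ramp_le_one _ _ _
    · rw [Set.indicator_of_notMem (by exact hx), ramp_zero (by linarith [hδ k]) (by linarith)]
  · obtain ⟨k, hk⟩ := (hup.eventually (gt_mem_nhds hu)).exists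
    have := ramp_tendsto π hπ hpos μ ε hε hε0 hch (κ - δ k) κ (by linarith [hδ2 k])
      (by linarith [hδ k])
    filter_upwards [this.eventually (gt_mem_nhds hk)] with n hn
    refine lt_of_le_of_lt (mul_le_mul_of_nonneg_left ?_ (inv_pos.2 (hε n)).le) hn
    rw [hrealn]
    refine integral_mono (hII n) (hRI _ _ _) fun x => ?_
    by_cases hx : κ ≤ x
    · rw [Set.indicator_of_mem (by exact hx), ramp_one (by linarith [hδ k]) hx]
    · rw [Set.indicator_of_notMem (by exact hx)]; exact ramp_nonneg _ _ _

lemma measurable_ellK (t : ℝ) : Measurable (fun p : ℝ × ℝ => ellK t p.1 p.2) := by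
  unfold ellK; fun_prop

instance muU.sFinite (γ : ℝ) : SFinite (muU γ) := by unfold muU; infer_instance
instance muEll.sFinite (γ t : ℝ) : SFinite (muEll γ t) := by unfold muEll; infer_instance
instance muEllR.sFinite (γ t : ℝ) (FR : Measure ℝ) [SFinite FR] : SFinite (muEllR γ t FR) := by
  unfold muEllR; infer_instance

lemma le_ellK_iff {x : ℝ} (hx : 0 < x) (s u : ℝ) :
    x ≤ ellK 1 s u ↔ (x ≤ u ∧ x ≤ 1) ∧ s ∈ Set.Icc (x - u) (1 - x) := by
  unfold ellK
  rw [Set.mem_Icc]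
  constructor
  · intro h
    rcases le_max_iff.1 h with h | h
    · linarith
    have h1 := min_le_left (s + u) 1
    have h2 := min_le_right (s + u) 1
    have h3 := le_max_left s 0
    have h4 := le_max_right s 0
    refine ⟨⟨?_, ?_⟩, ?_, ?_⟩ <;> linarith
  · rintro ⟨⟨h1, h2⟩, h3, h4⟩
    refine le_max_of_le_right ?_
    rw [le_sub_iff_add_le, le_min_iff]
    rcases max_cases s 0 with ⟨h, _⟩ | ⟨h, _⟩ <;> rw [h] <;> constructor <;> linarith

lemma muEll_apply (γ : ℝ) {A : Set ℝ} (hA : MeasurableSet A) (hA0 : A ⊆ Set.Ioi 0) :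
    muEll γ 1 A = ∫⁻ u in Set.Ioi 0, ENNReal.ofReal (u ^ (-γ - 1)) *
      volume {s | ellK 1 s u ∈ A} := by
  have hm := measurable_ellK 1
  unfold muEll
  rw [Measure.restrict_apply hA, Set.inter_eq_left.2 hA0, Measure.map_apply hm hA,
    Measure.prod_apply_symm (hm hA), muU, lintegral_withDensity_eq_lintegral_mul]
  · rfl
  · fun_prop
  · exact measurable_measure_prodMk_right (hm hA)

lemma muEll_Ici_gt (γ : ℝ) {x : ℝ} (hx : 1 < x) : muEll γ 1 (Set.Ici x) = 0 := by
  rw [muEll_apply γ measurableSet_Ici (fun y hy => lt_of_lt_of_le (zero_lt_one.trans hx) hy)]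
  have : ∀ u, {s | ellK 1 s u ∈ Set.Ici x} = ∅ := by
    intro u
    ext s
    simp only [Set.mem_ofPred_eq, Set.mem_Ici, le_ellK_iff (by linarith : 0 < x), Set.mem_empty_iff_false,
      iff_false]
    rintro ⟨⟨_, h⟩, _⟩
    linarith
  simp only [this, measure_empty, mul_zero, lintegral_zero]

lemma muEll_Ici_le {γ : ℝ} (hγ1 : 1 < γ) {x : ℝ} (hx0 : 0 < x) (hx : x ≤ 1) :
    muEll γ 1 (Set.Ici x) = ENNReal.ofReal
      (x ^ (-γ) / γ + (2 - γ) / ((γ - 1) * γ) * x ^ (1 - γ)) := by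
  rw [muEll_apply γ measurableSet_Ici (fun y hy => lt_of_lt_of_le hx0 hy)]
  have h1 : ∀ u ∈ Set.Ioi (0 : ℝ), ENNReal.ofReal (u ^ (-γ - 1)) *
      volume {s | ellK 1 s u ∈ Set.Ici x} = (Set.Ici x).indicator
        (fun u => ENNReal.ofReal ((1 - 2 * x) * u ^ (-γ - 1) + u ^ (-γ))) u := by
    intro u hu
    have hu0 : 0 < u := hu
    by_cases hux : x ≤ u
    · rw [Set.indicator_of_mem (by exact hux)]
      have : {s | ellK 1 s u ∈ Set.Ici x} = Set.Icc (x - u) (1 - x) := by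
        ext s
        simp only [Set.mem_ofPred_eq, Set.mem_Ici, le_ellK_iff hx0, hux, hx, true_and]
      rw [this, Real.volume_Icc, ← ENNReal.ofReal_mul (by positivity)]
      congr 1
      have : u ^ (-γ) = u ^ (-γ - 1) * u := by
        rw [← Real.rpow_add_one hu0.ne']; congr 1; ring
      rw [this]; ring
    · rw [Set.indicator_of_notMem (by exact hux)]
      have : {s | ellK 1 s u ∈ Set.Ici x} = ∅ := by
        ext s
        simp only [Set.mem_ofPred_eq, Set.mem_Ici, le_ellK_iff hx0, hux, false_and,
          Set.mem_empty_iff_false]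
      rw [this, measure_empty, mul_zero]
  rw [setLIntegral_congr_fun measurableSet_Ioi h1]
  rw [lintegral_indicator measurableSet_Ici, Measure.restrict_restrict measurableSet_Ici]
  have : Set.Ici x ∩ Set.Ioi 0 = Set.Ici x := Set.inter_eq_left.2 fun y hy => lt_of_lt_of_le hx0 hy
  rw [this, ← restrict_Ioi_eq_restrict_Ici]
  have i1 : IntegrableOn (fun u : ℝ => u ^ (-γ - 1)) (Set.Ioi x) :=
    integrableOn_Ioi_rpow_of_lt (by linarith) hx0
  have i2 : IntegrableOn (fun u : ℝ => u ^ (-γ)) (Set.Ioi x) :=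
    integrableOn_Ioi_rpow_of_lt (by linarith) hx0
  rw [← ofReal_integral_eq_lintegral_ofReal (f := fun u => (1 - 2 * x) * u ^ (-γ - 1) + u ^ (-γ))
    ((i1.const_mul _).add i2)]
  · rw [integral_add (i1.const_mul _) i2, integral_const_mul, integral_Ioi_rpow_of_lt (by linarith) hx0,
      integral_Ioi_rpow_of_lt (by linarith) hx0]
    congr 1
    have e1 : (-γ - 1 + 1) = -γ := by ring
    have e2 : x ^ (-γ + 1) = x ^ (-γ) * x := Real.rpow_add_one hx0.ne' _
    have e3 : x ^ (1 - γ) = x ^ (-γ) * x := by rw [← e2]; congr 1; ring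
    rw [e1, e2, e3]
    have : γ ≠ 0 := by linarith
    have : γ - 1 ≠ 0 := by linarith
    have : -γ + 1 ≠ 0 := by linarith
    field_simp
    rw [show (-γ + 1) = -(γ - 1) by ring]
    field_simp
    ring
  · filter_upwards [ae_restrict_mem measurableSet_Ioi] with u hu
    have hu' : x < u := hu
    have hu0 : 0 < u := hx0.trans hu'
    have : u ^ (-γ) = u ^ (-γ - 1) * u := by
      rw [← Real.rpow_add_one hu0.ne']; congr 1; ring
    change 0 ≤ (1 - 2 * x) * u ^ (-γ - 1) + u ^ (-γ)
    rw [this]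
    have : (1 - 2 * x) * u ^ (-γ - 1) + u ^ (-γ - 1) * u = u ^ (-γ - 1) * (1 - x + (u - x)) := by ring
    rw [this]
    have : 0 ≤ 1 - x + (u - x) := by linarith
    positivity

lemma muEllR_apply (γ : ℝ) (FR : Measure ℝ) [SFinite FR] {A : Set ℝ} (hA : MeasurableSet A)
    (hA0 : A ⊆ Set.Ioi 0) :
    muEllR γ 1 FR A = ∫⁻ r, muEll γ 1 {l | r * l ∈ A} ∂FR := by
  have hm : Measurable (fun p : ℝ × ℝ => p.1 * p.2) := by fun_prop
  unfold muEllR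
  rw [Measure.restrict_apply hA, Set.inter_eq_left.2 hA0, Measure.map_apply hm hA,
    Measure.prod_apply (hm hA)]
  rfl

lemma muEll_singleton (γ : ℝ) {x : ℝ} (hx0 : 0 < x) (hx : x ≠ 1) : muEll γ 1 {x} = 0 := by
  rw [muEll_apply γ (measurableSet_singleton x) (by simpa using hx0)]
  rw [lintegral_eq_zero_iff']
  swap
  · refine AEMeasurable.mul (by fun_prop) (Measurable.aemeasurable ?_)
    exact measurable_measure_prodMk_right (measurable_ellK 1 (measurableSet_singleton x))
  have hae : ∀ᵐ u : ℝ ∂(volume.restrict (Set.Ioi 0)), u ≠ x :=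
    ae_restrict_of_ae (Measure.ae_ne volume x)
  filter_upwards [hae] with u hu
  have : volume {s | ellK 1 s u ∈ ({x} : Set ℝ)} = 0 := by
    refine measure_mono_null (t := {x - u, 1 - x}) ?_ (Set.Finite.measure_zero (by simp) _)
    intro s hs
    simp only [Set.mem_ofPred_eq, Set.mem_singleton_iff, ellK] at hs
    simp only [Set.mem_insert_iff, Set.mem_singleton_iff]
    by_contra! hcon
    obtain ⟨h1, h2⟩ := hcon
    rcases max_cases 0 (min (s + u) 1 - max s 0) with ⟨h, _⟩ | ⟨h, _⟩
    · linarith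
    · rw [h] at hs
      rcases min_cases (s + u) 1 with ⟨ha, _⟩ | ⟨ha, _⟩ <;>
      rcases max_cases s 0 with ⟨hb, _⟩ | ⟨hb, _⟩ <;> rw [ha, hb] at hs
      · exact hu (by linarith)
      · exact h1 (by linarith)
      · exact h2 (by linarith)
      · exact hx (by linarith)
  rw [this, mul_zero]; rfl

lemma muEllR_singleton (γ : ℝ) (FR : Measure ℝ) [SFinite FR] (hFRpos : FR (Set.Iic 0) = 0)
    {κ : ℝ} (hκ : 0 < κ) (hκatom : FR {κ} = 0) : muEllR γ 1 FR {κ} = 0 := by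
  rw [muEllR_apply γ FR (measurableSet_singleton κ) (by simpa using hκ)]
  have h1 : ∀ᵐ r ∂FR, 0 < r := by
    rw [ae_iff]; simpa [Set.Iic] using hFRpos
  have h2 : ∀ᵐ r ∂FR, r ≠ κ := by
    rw [ae_iff]; simpa using hκatom
  have : (fun r => muEll γ 1 {l | r * l ∈ ({κ} : Set ℝ)}) =ᵐ[FR] 0 := by
    filter_upwards [h1, h2] with r hr hrκ
    have e : {l | r * l ∈ ({κ} : Set ℝ)} = {κ / r} := by
      ext l
      simp only [Set.mem_ofPred_eq, Set.mem_singleton_iff]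
      rw [eq_div_iff hr.ne', mul_comm]
    rw [e]
    refine muEll_singleton γ (div_pos hκ hr) ?_
    intro h
    rw [div_eq_one_iff_eq hr.ne'] at h
    exact hrκ h.symm
  rw [lintegral_congr_ae this]; simp

lemma rpow_sub_one_bound {γ κ r : ℝ} (hκ : 0 < κ) (hr : κ ≤ r) :
    r ^ (γ - 1) ≤ κ⁻¹ * r ^ γ := by
  have hr0 : 0 < r := hκ.trans_le hr
  rw [Real.rpow_sub_one hr0.ne', div_eq_inv_mul]
  gcongr

lemma int_sub_one {γ : ℝ} (FR : Measure ℝ) (hmom : Integrable (fun r => r ^ γ) FR)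
    {κ : ℝ} (hκ : 0 < κ) : IntegrableOn (fun r => r ^ (γ - 1)) (Set.Ici κ) FR := by
  refine (hmom.integrableOn.const_mul κ⁻¹).mono' (by fun_prop) ?_
  filter_upwards [ae_restrict_mem measurableSet_Ici] with r hr
  have hr0 : 0 < r := hκ.trans_le hr
  rw [Real.norm_of_nonneg (by positivity)]
  exact rpow_sub_one_bound hκ hr

/-- The tail `π([κ,∞))`. -/
lemma muEllR_Ici {γ : ℝ} (hγ1 : 1 < γ) (hγ2 : γ < 2) (FR : Measure ℝ) [IsProbabilityMeasure FR]
    (hFRpos : FR (Set.Iic 0) = 0) (hmom : Integrable (fun r => r ^ γ) FR)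
    {κ : ℝ} (hκ : 0 < κ) : muEllR γ 1 FR (Set.Ici κ) = ENNReal.ofReal
      (κ ^ (-γ) / γ * (∫ r in Set.Ici κ, r ^ γ ∂FR)
        + (2 - γ) * κ ^ (1 - γ) / ((γ - 1) * γ) * (∫ r in Set.Ici κ, r ^ (γ - 1) ∂FR)) := by
  rw [muEllR_apply γ FR measurableSet_Ici (fun y hy => lt_of_lt_of_le hκ hy)]
  have h1 : ∀ᵐ r ∂FR, 0 < r := by
    rw [ae_iff]; simpa [Set.Iic] using hFRpos
  have : (fun r => muEll γ 1 {l | r * l ∈ Set.Ici κ}) =ᵐ[FR] (Set.Ici κ).indicator fun r =>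
      ENNReal.ofReal (κ ^ (-γ) / γ * r ^ γ
        + (2 - γ) * κ ^ (1 - γ) / ((γ - 1) * γ) * r ^ (γ - 1)) := by
    filter_upwards [h1] with r hr
    have e : {l | r * l ∈ Set.Ici κ} = Set.Ici (κ / r) := by
      ext l
      simp only [Set.mem_ofPred_eq, Set.mem_Ici]
      rw [div_le_iff₀ hr, mul_comm]
    rw [e]
    by_cases hrκ : κ ≤ r
    · rw [Set.indicator_of_mem (by exact hrκ), muEll_Ici_le hγ1 (div_pos hκ hr) ((div_le_one hr).2 hrκ)]
      congr 1
      rw [Real.div_rpow hκ.le hr.le, Real.div_rpow hκ.le hr.le, Real.rpow_neg hr.le,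
        show 1 - γ = -(γ - 1) by ring, Real.rpow_neg hr.le (γ - 1), div_inv_eq_mul, div_inv_eq_mul]
      ring
    · rw [Set.indicator_of_notMem (by exact hrκ), muEll_Ici_gt γ ((one_lt_div hr).2 (not_le.1 hrκ))]
  rw [lintegral_congr_ae this, lintegral_indicator measurableSet_Ici]
  have i1 : IntegrableOn (fun r => r ^ γ) (Set.Ici κ) FR := hmom.integrableOn
  have i2 := int_sub_one FR hmom hκ
  rw [← ofReal_integral_eq_lintegral_ofReal (f := fun r => κ ^ (-γ) / γ * r ^ γ
        + (2 - γ) * κ ^ (1 - γ) / ((γ - 1) * γ) * r ^ (γ - 1))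
    ((i1.const_mul _).add (i2.const_mul _))]
  · rw [integral_add (i1.const_mul _) (i2.const_mul _), integral_const_mul, integral_const_mul]
  · filter_upwards [ae_restrict_mem measurableSet_Ici] with r hr
    have hr0 : 0 < r := hκ.trans_le hr
    have : 0 < γ - 1 := by linarith
    have : 0 < 2 - γ := by linarith
    have : 0 < γ := by linarith
    change 0 ≤ κ ^ (-γ) / γ * r ^ γ + (2 - γ) * κ ^ (1 - γ) / ((γ - 1) * γ) * r ^ (γ - 1)
    positivity

lemma muEllR_tail {γ : ℝ} (hγ1 : 1 < γ) (hγ2 : γ < 2) (FR : Measure ℝ) [IsProbabilityMeasure FR]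
    (hFRpos : FR (Set.Iic 0) = 0) (hmom : Integrable (fun r => r ^ γ) FR) :
    ∃ K : ℝ, 0 ≤ K ∧ ∀ x, 0 < x → muEllR γ 1 FR (Set.Ici x) ≤ ENNReal.ofReal (K * x ^ (-γ)) := by
  have hg1 : 0 < γ - 1 := by linarith
  have hg2 : 0 < 2 - γ := by linarith
  have hg : 0 < γ := by linarith
  have h1 : ∀ᵐ r ∂FR, 0 ≤ r ^ γ := by
    have : ∀ᵐ r ∂FR, 0 < r := by rw [ae_iff]; simpa [Set.Iic] using hFRpos
    filter_upwards [this] with r hr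
    positivity
  have hI : 0 ≤ ∫ r, r ^ γ ∂FR := integral_nonneg_of_ae h1
  refine ⟨(1 / γ + (2 - γ) / ((γ - 1) * γ)) * ∫ r, r ^ γ ∂FR, by positivity, fun x hx => ?_⟩
  rw [muEllR_Ici hγ1 hγ2 FR hFRpos hmom hx]
  refine ENNReal.ofReal_le_ofReal ?_
  have a1 : ∫ r in Set.Ici x, r ^ γ ∂FR ≤ ∫ r, r ^ γ ∂FR := setIntegral_le_integral hmom h1
  have a2 : ∫ r in Set.Ici x, r ^ (γ - 1) ∂FR ≤ x⁻¹ * ∫ r, r ^ γ ∂FR := by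
    calc _ ≤ ∫ r in Set.Ici x, x⁻¹ * r ^ γ ∂FR := by
          refine setIntegral_mono_on (int_sub_one FR hmom hx) (hmom.integrableOn.const_mul _)
            measurableSet_Ici fun r hr => rpow_sub_one_bound hx hr
      _ = x⁻¹ * ∫ r in Set.Ici x, r ^ γ ∂FR := integral_const_mul _ _
      _ ≤ _ := by gcongr
  have e : x ^ (1 - γ) = x ^ (-γ) * x := by
    rw [← Real.rpow_add_one hx.ne']; congr 1; ring
  calc _ ≤ x ^ (-γ) / γ * (∫ r, r ^ γ ∂FR)
        + (2 - γ) * x ^ (1 - γ) / ((γ - 1) * γ) * (x⁻¹ * ∫ r, r ^ γ ∂FR) := by gcongr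
    _ = _ := by
      rw [e]; field_simp

lemma muEllR_nonpos (γ t : ℝ) (FR : Measure ℝ) : ∀ᵐ v ∂(muEllR γ t FR), 0 < v := by
  unfold muEllR
  exact ae_restrict_mem measurableSet_Ioi

lemma mB_integral {v : ℝ} (hv : 0 < v) : mB v ≤ 2 * ∫ s in (0 : ℝ)..v, min 1 s := by
  have hc : Continuous fun s : ℝ => min 1 s := by fun_prop
  have hI : ∀ a b : ℝ, IntervalIntegrable (fun s : ℝ => min 1 s) volume a b := fun a b =>
    hc.intervalIntegrable a b
  unfold mB
  rw [abs_of_pos hv]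
  have h1 : ∀ w : ℝ, 0 ≤ w → w ≤ 1 → ∫ s in (0 : ℝ)..w, min 1 s = w ^ 2 / 2 := by
    intro w hw0 hw
    have : ∫ s in (0 : ℝ)..w, min 1 s = ∫ s in (0 : ℝ)..w, s := by
      apply intervalIntegral.integral_congr
      intro s hs
      rw [Set.uIcc_of_le hw0] at hs
      exact min_eq_right (hs.2.trans hw)
    rw [this]; simp
  rcases le_total v 1 with h | h
  · rw [h1 v hv.le h]
    refine (min_le_right _ _).trans (by linarith)
  · rw [← intervalIntegral.integral_add_adjacent_intervals (hI 0 1) (hI 1 v), h1 1 zero_le_one le_rfl]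
    have : ∫ s in (1 : ℝ)..v, min 1 s = ∫ s in (1 : ℝ)..v, (1 : ℝ) := by
      apply intervalIntegral.integral_congr
      intro s hs
      rw [Set.uIcc_of_le h] at hs
      exact min_eq_left hs.1
    rw [this]
    simp
    left
    linarith

lemma muEllR_integrable {γ : ℝ} (hγ1 : 1 < γ) (hγ2 : γ < 2) (FR : Measure ℝ)
    [IsProbabilityMeasure FR]
    (hFRpos : FR (Set.Iic 0) = 0) (hmom : Integrable (fun r => r ^ γ) FR) :
    Integrable mB (muEllR γ 1 FR) := by
  obtain ⟨K, hK, htail⟩ := muEllR_tail hγ1 hγ2 FR hFRpos hmom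
  have hp := muEllR_nonpos γ 1 FR
  refine ⟨continuous_mB.aestronglyMeasurable, ?_⟩
  rw [hasFiniteIntegral_iff_ofReal (ae_of_all _ mB_nonneg)]
  have hc : Continuous fun s : ℝ => min 1 s := by fun_prop
  have hlc := lintegral_comp_eq_lintegral_meas_le_mul (f := fun v : ℝ => v) (g := fun s => min 1 s)
    (muEllR γ 1 FR) (hp.mono fun v hv => hv.le) aemeasurable_id
    (fun t _ => hc.intervalIntegrable _ _)
    ((ae_restrict_mem measurableSet_Ioi).mono fun s hs => le_min zero_le_one (le_of_lt hs))
  have hle : ∫⁻ v, ENNReal.ofReal (mB v) ∂(muEllR γ 1 FR)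
      ≤ 2 * ∫⁻ v, ENNReal.ofReal (∫ s in (0 : ℝ)..v, min 1 s) ∂(muEllR γ 1 FR) := by
    rw [← lintegral_const_mul' _ _ (by norm_num)]
    refine lintegral_mono_ae ?_
    filter_upwards [hp] with v hv
    refine (ENNReal.ofReal_le_ofReal (mB_integral hv)).trans ?_
    rw [ENNReal.ofReal_mul (by norm_num)]; simp
  refine hle.trans_lt (ENNReal.mul_lt_top (by norm_num) ?_)
  rw [hlc]
  have hint : IntegrableOn (fun s : ℝ => K * (s ^ (-γ) * min 1 s)) (Set.Ioi 0) := by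
    refine Integrable.const_mul ?_ K
    rw [← IntegrableOn, ← Set.Ioc_union_Ioi_eq_Ioi zero_le_one]
    refine IntegrableOn.union ?_ ?_
    · have : IntegrableOn (fun s : ℝ => s ^ (1 - γ)) (Set.Ioc 0 1) :=
        (intervalIntegrable_iff_integrableOn_Ioc_of_le zero_le_one).1
          (intervalIntegral.intervalIntegrable_rpow' (by linarith))
      refine this.congr_fun (fun s hs => ?_) measurableSet_Ioc
      simp only
      rw [min_eq_right hs.2, ← Real.rpow_add_one hs.1.ne']; congr 1; ring
    · have : IntegrableOn (fun s : ℝ => s ^ (-γ)) (Set.Ioi 1) :=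
        integrableOn_Ioi_rpow_of_lt (by linarith) one_pos
      refine this.congr_fun (fun s hs => ?_) measurableSet_Ioi
      simp only
      rw [min_eq_left (le_of_lt hs), mul_one]
  refine lt_of_le_of_lt ?_ hint.lintegral_lt_top
  refine setLIntegral_mono' measurableSet_Ioi fun s hs => ?_
  have hs0 : 0 < s := hs
  refine (mul_le_mul_left (htail s hs0) _).trans ?_
  rw [← ENNReal.ofReal_mul (by positivity), mul_assoc]

lemma muU_scale (γ : ℝ) {t : ℝ} (ht : 0 < t) :
    Measure.map (t * ·) (muU γ) = ENNReal.ofReal (t ^ γ) • muU γ := by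
  have hm : Measurable (t * · : ℝ → ℝ) := by fun_prop
  have hd : Measurable fun u : ℝ => ENNReal.ofReal (u ^ (-γ - 1)) := by fun_prop
  ext A hA
  have hval : ∀ B : Set ℝ, MeasurableSet B → muU γ B
      = ∫⁻ u, (B ∩ Set.Ioi 0).indicator (fun u => ENNReal.ofReal (u ^ (-γ - 1))) u := by
    intro B hB
    rw [lintegral_indicator (hB.inter measurableSet_Ioi), muU, withDensity_apply _ hB,
      Measure.restrict_restrict hB]
  rw [Measure.map_apply hm hA, Measure.smul_apply, hval _ (hm hA), hval _ hA, smul_eq_mul]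
  set g : ℝ → ℝ≥0∞ := (A ∩ Set.Ioi 0).indicator (fun u => ENNReal.ofReal (u ^ (-γ - 1))) with hg
  have hgm : Measurable g := hd.indicator (hA.inter measurableSet_Ioi)
  have h1 : ∫⁻ u, g (t * u) = ENNReal.ofReal t⁻¹ * ∫⁻ u, g u := by
    rw [← lintegral_map hgm hm, Real.map_volume_mul_left ht.ne', lintegral_smul_measure,
      abs_of_pos (inv_pos.2 ht), smul_eq_mul]
  have h2 : ∀ u, ((fun x => t * x) ⁻¹' A ∩ Set.Ioi 0).indicator
      (fun u => ENNReal.ofReal (u ^ (-γ - 1))) u = ENNReal.ofReal (t ^ (γ + 1)) * g (t * u) := by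
    intro u
    by_cases hu : u ∈ (fun x => t * x) ⁻¹' A ∩ Set.Ioi 0
    · have hu0 : 0 < u := hu.2
      have : t * u ∈ A ∩ Set.Ioi 0 := ⟨hu.1, mul_pos ht hu0⟩
      rw [Set.indicator_of_mem hu, hg, Set.indicator_of_mem this,
        ← ENNReal.ofReal_mul (by positivity)]
      congr 1
      rw [Real.mul_rpow ht.le hu0.le, ← mul_assoc, ← Real.rpow_add ht,
        show γ + 1 + (-γ - 1) = 0 by ring, Real.rpow_zero, one_mul]
    · have : t * u ∉ A ∩ Set.Ioi 0 := by
        rintro ⟨h, h'⟩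
        exact hu ⟨h, (mul_pos_iff_of_pos_left ht).1 h'⟩
      rw [Set.indicator_of_notMem hu, hg, Set.indicator_of_notMem this, mul_zero]
  simp_rw [h2]
  rw [lintegral_const_mul' _ _ ENNReal.ofReal_ne_top, h1, ← mul_assoc, ← ENNReal.ofReal_mul (by positivity)]
  congr 2
  rw [Real.rpow_add_one ht.ne']
  field_simp

lemma prod_smul_aux (μ ν : Measure ℝ) [SFinite ν] (c : ℝ) :
    μ.prod (ENNReal.ofReal c • ν) = ENNReal.ofReal c • μ.prod ν := by
  have : SFinite (ENNReal.ofReal c • ν) := inferInstance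
  ext s hs
  rw [Measure.prod_apply hs, Measure.smul_apply, Measure.prod_apply hs, smul_eq_mul,
    ← lintegral_const_mul _ (measurable_measure_prodMk_left hs)]
  simp

lemma muEll_scale (γ : ℝ) {t : ℝ} (ht : 0 < t) :
    Measure.map (t * ·) (muEll γ 1) = ENNReal.ofReal (t ^ (γ - 1)) • muEll γ t := by
  have hm : Measurable (t * · : ℝ → ℝ) := by fun_prop
  have hpre : (t * · : ℝ → ℝ) ⁻¹' (Set.Ioi 0) = Set.Ioi 0 := by
    ext x; simp [ht]
  have hS : Measure.map (Prod.map (t * ·) (t * ·)) ((volume : Measure ℝ).prod (muU γ))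
      = ENNReal.ofReal (t ^ (γ - 1)) • ((volume : Measure ℝ).prod (muU γ)) := by
    rw [← Measure.map_prod_map _ _ hm hm, muU_scale γ ht, Real.map_volume_mul_left ht.ne',
      prod_smul_aux, Measure.prod_smul_left, smul_smul, ← ENNReal.ofReal_mul (by positivity),
      abs_of_pos (inv_pos.2 ht), Real.rpow_sub_one ht.ne']
    rfl
  unfold muEll
  rw [← Measure.restrict_smul, ← Measure.map_smul, ← hS,
    Measure.map_map (measurable_ellK t) (hm.prodMap hm)]
  have hcomp : ((fun p : ℝ × ℝ => ellK t p.1 p.2) ∘ Prod.map (t * ·) (t * ·))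
      = (t * ·) ∘ (fun p : ℝ × ℝ => ellK 1 p.1 p.2) := by
    funext p
    simp only [Function.comp, Prod.map, ellK]
    rw [mul_max_of_nonneg _ _ ht.le, mul_sub, mul_max_of_nonneg _ _ ht.le,
      mul_min_of_nonneg _ _ ht.le]
    simp [mul_add]
  rw [hcomp, ← Measure.map_map hm (measurable_ellK 1), Measure.restrict_map hm measurableSet_Ioi,
    hpre]

lemma muEllR_scale (γ : ℝ) (FR : Measure ℝ) [SFinite FR] {t : ℝ} (ht : 0 < t) :
    Measure.map (t * ·) (muEllR γ 1 FR) = ENNReal.ofReal (t ^ (γ - 1)) • muEllR γ t FR := by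
  have hm : Measurable (t * · : ℝ → ℝ) := by fun_prop
  have hmul : Measurable (fun p : ℝ × ℝ => p.1 * p.2) := by fun_prop
  have hpre : (t * · : ℝ → ℝ) ⁻¹' (Set.Ioi 0) = Set.Ioi 0 := by
    ext x; simp [ht]
  unfold muEllR
  rw [← Measure.restrict_smul, ← Measure.map_smul, ← prod_smul_aux, ← muEll_scale γ ht]
  have h1 : FR.prod (Measure.map (t * ·) (muEll γ 1))
      = Measure.map (Prod.map id (t * ·)) (FR.prod (muEll γ 1)) := by
    rw [← Measure.map_prod_map _ _ measurable_id hm, Measure.map_id]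
  rw [h1, Measure.map_map hmul (measurable_id.prodMap hm)]
  have hcomp : ((fun p : ℝ × ℝ => p.1 * p.2) ∘ Prod.map id (t * ·))
      = (t * ·) ∘ (fun p : ℝ × ℝ => p.1 * p.2) := by
    funext p
    simp only [Function.comp, Prod.map, id]
    ring
  rw [hcomp, ← Measure.map_map hm hmul, Measure.restrict_map hm measurableSet_Ioi, hpre]

lemma ker_scale (γ : ℝ) (FR : Measure ℝ) [SFinite FR] {t : ℝ} (ht : 0 < t) (θ : ℝ) :
    ∫ v, kerK (θ / t) v ∂(muEllR γ t FR)
      = ((t ^ (1 - γ) : ℝ) : ℂ) * ∫ v, kerK θ v ∂(muEllR γ 1 FR) := by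
  have hm : Measurable (t * · : ℝ → ℝ) := by fun_prop
  have hk : Continuous (kerK (θ / t)) := by unfold kerK; fun_prop
  have h1 : ∫ v, kerK θ v ∂(muEllR γ 1 FR)
      = ∫ v, kerK (θ / t) v ∂(Measure.map (t * ·) (muEllR γ 1 FR)) := by
    rw [integral_map hm.aemeasurable hk.aestronglyMeasurable]
    congr 1
    funext v
    unfold kerK
    have : (t : ℂ) ≠ 0 := by exact_mod_cast ht.ne'
    have e : ((θ / t : ℝ) : ℂ) * ((t * v : ℝ) : ℂ) = θ * v := by push_cast; field_simp
    rw [e]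
  rw [h1, muEllR_scale γ FR ht, integral_smul_measure, ENNReal.toReal_ofReal (by positivity),
    Complex.real_smul, ← mul_assoc, ← Complex.ofReal_mul, ← Real.rpow_add ht]
  simp

/-- Intermediate large deviations: if `P(R ≥ κ) > 0` and `P(R = κ) = 0`, then
`P(Y_t ≥ κt) = Q·D_I^{(1)}(κ)·t^{-(γ-1)}·(1+o(1))` as `t → ∞`, where
`D_I^{(1)}(κ) = (κ^{-γ}/γ)E[R^γ 1{R ≥ κ}] + ((2-γ)κ^{1-γ}/((γ-1)γ))E[R^{γ-1} 1{R ≥ κ}]`. -/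
theorem stmt_2 (γ Q : ℝ) (hγ1 : 1 < γ) (hγ2 : γ < 2) (hQ : 0 < Q)
    (FR : Measure ℝ) [IsProbabilityMeasure FR] (hFRpos : FR (Set.Iic 0) = 0)
    (hmom : Integrable (fun r => r ^ γ) FR)
    (Ω : Type*) [MeasurableSpace Ω] (P : Measure Ω) [IsProbabilityMeasure P]
    (Y : ℝ → Ω → ℝ) (hYmeas : ∀ t, Measurable (Y t))
    (hYchar : ∀ t : ℝ, 0 < t → ∀ θ : ℝ,
      ∫ ω, Complex.exp (θ * Y t ω * Complex.I) ∂P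
        = Complex.exp (Q * ∫ v, (Complex.exp (θ * v * Complex.I) - 1 - θ * v * Complex.I)
            ∂(muEllR γ t FR)))
    (κ : ℝ) (hκ : 0 < κ) (hκpos : FR (Set.Ici κ) ≠ 0) (hκatom : FR {κ} = 0) :
    Tendsto (fun t => (P {ω | κ * t ≤ Y t ω}).toReal / t ^ (-(γ - 1)))
      atTop
      (𝓝 (Q * (κ ^ (-γ) / γ * (∫ r in Set.Ici κ, r ^ γ ∂FR)
        + (2 - γ) * κ ^ (1 - γ) / ((γ - 1) * γ) * (∫ r in Set.Ici κ, r ^ (γ - 1) ∂FR)))) := by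
  set π : Measure ℝ := muEllR γ 1 FR with hπdef
  have hπ : Integrable mB π := muEllR_integrable hγ1 hγ2 FR hFRpos hmom
  have hat : π {κ} = 0 := muEllR_singleton γ FR hFRpos hκ hκatom
  set D : ℝ := κ ^ (-γ) / γ * (∫ r in Set.Ici κ, r ^ γ ∂FR)
        + (2 - γ) * κ ^ (1 - γ) / ((γ - 1) * γ) * (∫ r in Set.Ici κ, r ^ (γ - 1) ∂FR) with hD
  have hIci : π (Set.Ici κ) = ENNReal.ofReal D := muEllR_Ici hγ1 hγ2 FR hFRpos hmom hκ
  have hg1 : 0 < γ - 1 := by linarith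
  have hg2 : 0 < 2 - γ := by linarith
  have hg : 0 < γ := by linarith
  have hDpos : 0 < D := by
    have a1 : 0 < ∫ r in Set.Ici κ, r ^ γ ∂FR := by
      have hc : ∫ r in Set.Ici κ, κ ^ γ ∂FR ≤ ∫ r in Set.Ici κ, r ^ γ ∂FR := by
        refine setIntegral_mono_on (by simp) hmom.integrableOn measurableSet_Ici fun r hr => ?_
        exact Real.rpow_le_rpow hκ.le hr hg.le
      refine lt_of_lt_of_le ?_ hc
      rw [setIntegral_const, smul_eq_mul]
      have : 0 < FR.real (Set.Ici κ) := ENNReal.toReal_pos hκpos (measure_ne_top _ _)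
      positivity
    have a2 : 0 ≤ ∫ r in Set.Ici κ, r ^ (γ - 1) ∂FR := by
      refine setIntegral_nonneg measurableSet_Ici fun r hr => ?_
      exact Real.rpow_nonneg (hκ.le.trans hr) _
    positivity
  have hpos : ∫ x, wS x ∂π ≠ 0 := by
    intro h0
    rw [integral_eq_zero_iff_of_nonneg wS_nonneg (integrable_wS π hπ)] at h0
    have : π (Set.Ici κ) = 0 := by
      refine measure_mono_null (t := {x | ¬ wS x = (0 : ℝ → ℝ) x}) ?_ h0
      intro x hx
      exact (wS_pos (hκ.trans_le hx)).ne'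
    rw [hIci, ENNReal.ofReal_eq_zero] at this
    linarith
  have hreal : π.real (Set.Ici κ) = D := by
    rw [Measure.real, hIci, ENNReal.toReal_ofReal hDpos.le]
  refine tendsto_of_seq_tendsto fun u hu => ?_
  set τ : ℕ → ℝ := fun n => max (u n) 1 with hτ
  have hτ0 : ∀ n, 0 < τ n := fun n => lt_max_of_lt_right one_pos
  have hτu : ∀ᶠ n in atTop, τ n = u n := by
    filter_upwards [hu.eventually_ge_atTop 1] with n hn
    exact max_eq_left hn
  have hτlim : Tendsto τ atTop atTop := tendsto_atTop_mono (fun n => le_max_left _ _) hu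
  have hZm : ∀ n, Measurable fun ω => Y (τ n) ω / τ n := fun n => (hYmeas _).div_const _
  set μ : ℕ → Measure ℝ := fun n => P.map (fun ω => Y (τ n) ω / τ n) with hμ
  have hμp : ∀ n, IsProbabilityMeasure (μ n) := fun n =>
    Measure.isProbabilityMeasure_map (hZm n).aemeasurable
  have hlim := small_time π hπ hpos μ (fun n => Q * τ n ^ (1 - γ))
    (fun n => mul_pos hQ (Real.rpow_pos_of_pos (hτ0 n) _)) ?_ ?_ κ hκ hat
  · rw [hreal] at hlim
    refine (hlim.const_mul Q).congr' ?_
    filter_upwards [hτu] with n hn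
    have hset : (μ n).real (Set.Ici κ) = (P {ω | κ * u n ≤ Y (u n) ω}).toReal := by
      rw [Measure.real, hμ, Measure.map_apply (hZm n) measurableSet_Ici]
      congr 2
      ext ω
      change κ ≤ Y (τ n) ω / τ n ↔ κ * u n ≤ Y (u n) ω
      rw [le_div_iff₀ (hτ0 n), hn]
    rw [hset]
    simp only [Function.comp]
    rw [hn, show -(γ - 1) = 1 - γ by ring]
    have : 0 < u n ^ (1 - γ) := by rw [← hn]; exact Real.rpow_pos_of_pos (hτ0 n) _
    field_simp
  · have h1 := (tendsto_rpow_neg_atTop hg1).comp hτlim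
    have h2 := h1.const_mul Q
    rw [mul_zero] at h2
    refine h2.congr fun n => ?_
    simp only [Function.comp]
    rw [show -(γ - 1) = 1 - γ by ring]
  · intro n θ
    rw [charFun_apply_real, hμ, integral_map (hZm n).aemeasurable
      (Continuous.aestronglyMeasurable (by fun_prop))]
    have h := hYchar (τ n) (hτ0 n) (θ / τ n)
    have h2 := ker_scale γ FR (hτ0 n) θ
    unfold kerK at h2
    rw [h2] at h
    have e : ∀ ω, ((θ : ℂ) * ((Y (τ n) ω / τ n : ℝ) : ℂ) * Complex.I)
        = ((θ / τ n : ℝ) : ℂ) * Y (τ n) ω * Complex.I := by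
      intro ω; push_cast; ring
    simp_rw [e]
    rw [h]
    congr 1
    unfold kerK
    push_cast
    ring
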